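/- Let k ≥ 1 and let G be a simple graph with a dominating vertex u* such that φ(G) ≤ k−1. Suppose that the edge set of G − u* is the union of the edge sets of k−1 pairwise edge-disjoint triangles. Then every non-trivial connected component of G − u* is a triangle-cactus, the number of triangles of G − u* equals k−1, and φ(G) = k−1. -/

import Mathlib

/-!
Let `H = G - u*` and let `T` be a triangle of its decomposition. Suppose that `H` without the edges
inside `T` still joins two vertices of `T`; close a shortest walk `p` that does so with an edge of
`T` to a cycle `C`. Every triangle of the decomposition having an edge on `C` has a vertex off `C`,
since a geodesic contains no triangle. These vertices are distinct for distinct triangles: the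
neighbours on a geodesic of a vertex `w` lie on at most three consecutive distance levels, whereas
two triangles meeting in `w` off `C` would give `w` four neighbours on `p`, or, if one of them
is `T`, a shorter walk between vertices of `T`. Each such triangle can therefore be replaced by the
one spanned by `u*`, an end of its edge on `C` and its vertex off `C`. The triangles stay
edge-disjoint and no longer use edges of `C`, so that `C` is one more cycle, against
`φ(G) ≤ k - 1`.

Hence the vertices of `T` lie in different components of `H` without the edges of `T`, so that a
cycle through an edge of `T` stays in `T`: the only cycles of `H` are the given triangles.
-/

open scoped Classical

namespace PaperEDC

/-- `G` contains `m` pairwise edge-disjoint cycles. -/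
def HasEDC {V : Type*} (G : SimpleGraph V) (m : ℕ) : Prop :=
  ∃ c : Fin m → Σ v : V, G.Walk v v,
    (∀ i, (c i).2.IsCycle) ∧
    ∀ i j, i ≠ j → ∀ e ∈ (c i).2.edges, e ∉ (c j).2.edges

/-- `φ(G)`: the maximum number of pairwise edge-disjoint cycles in `G`. -/
noncomputable def phi {V : Type*} (G : SimpleGraph V) : ℕ := sSup {m | HasEDC G m}

/-- `K₁ ∇ H`: the join of a single new vertex with `H`. -/
def joinK1 {V : Type*} (H : SimpleGraph V) : SimpleGraph (Option V) :=
  SimpleGraph.fromRel fun a b => a = none ∨ ∃ u v, a = some u ∧ b = some v ∧ H.Adj u v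

/-- `t(G)`: the number of triangles of `G`. -/
noncomputable def triCount {V : Type*} (G : SimpleGraph V) : ℕ :=
  Nat.card {s : Finset V // G.IsNClique 3 s}

/-- A triangle-cactus: a connected graph in which every edge lies on a cycle and every
cycle is a triangle. -/
def IsTriangleCactus {V : Type*} (G : SimpleGraph V) : Prop :=
  G.Connected ∧
  (∀ e ∈ G.edgeSet, ∃ (v : V) (w : G.Walk v v), w.IsCycle ∧ e ∈ w.edges) ∧
  ∀ (v : V) (w : G.Walk v v), w.IsCycle → w.length = 3

/-- `e(G)`: the number of edges of `G`. -/
noncomputable def ecard {V : Type*} (G : SimpleGraph V) : ℕ := Nat.card G.edgeSet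

/-- `ρ(G)`: the spectral radius (largest adjacency eigenvalue) of `G`. -/
noncomputable def specRad {V : Type*} [Fintype V] (G : SimpleGraph V) : ℝ :=
  sSup {x : ℝ | ∃ f : V → ℝ, f ≠ 0 ∧ ∀ v : V, ∑ u : V, (if G.Adj v u then f u else 0) = x * f v}

open SimpleGraph

namespace HasEDC

variable {V W : Type*} {G : SimpleGraph V}

theorem of_fintype {ι : Type*} [Fintype ι] (c : ι → Σ v : V, G.Walk v v)
    (hc : ∀ i, (c i).2.IsCycle)
    (hdisj : Pairwise fun i j ↦ List.Disjoint (c i).2.edges (c j).2.edges) :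
    HasEDC G (Fintype.card ι) :=
  ⟨c ∘ (Fintype.equivFin ι).symm, fun _ ↦ hc _, fun _ _ hij _ hi hj ↦
    hdisj ((Fintype.equivFin ι).symm.injective.ne hij) hi hj⟩

theorem map {H : SimpleGraph W} {m : ℕ} (h : HasEDC H m) (f : H →g G)
    (hf : Function.Injective f) : HasEDC G m := by
  obtain ⟨c, hc, hdisj⟩ := h
  refine ⟨fun i ↦ ⟨_, (c i).2.map f⟩, fun i ↦ (hc i).map hf, fun i j hij e hi hj ↦ ?_⟩
  rw [Walk.edges_map] at hi hj
  exact List.disjoint_map (Sym2.map.injective hf) (fun e ↦ hdisj i j hij e) hi hj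

end HasEDC

section StarComplement

variable {V : Type*} {G : SimpleGraph V}

theorem exists_mem_edges_notMem_of_isCycle {v : V} {w : G.Walk v v} (hw : w.IsCycle) (u : V) :
    ∃ e ∈ w.edges, u ∉ e := by
  by_contra! hstar
  have hle : ∀ e ∈ w.edges, e ∈ (starGraph u).edgeSet := by
    rintro ⟨a, b⟩ he
    simpa [(w.adj_of_mem_edges he).ne, eq_comm] using hstar _ he
  exact isAcyclic_starGraph u _ (hw.transfer hle)

theorem bddAbove_hasEDC {u : V} (hfin : (G.edgeSet \ G.incidenceSet u).Finite) :
    BddAbove {m | HasEDC G m} := by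
  refine ⟨(G.edgeSet \ G.incidenceSet u).ncard, ?_⟩
  rintro m ⟨c, hc, hdisj⟩
  choose f hf hfu using fun i ↦ exists_mem_edges_notMem_of_isCycle (hc i) u
  have hinj : Function.Injective f := fun i j hij ↦
    of_not_not fun hne ↦ hdisj i j hne (f i) (hf i) (hij ▸ hf j)
  have hrange : Set.range f ⊆ G.edgeSet \ G.incidenceSet u := by
    rintro _ ⟨i, rfl⟩
    exact ⟨(c i).2.edges_subset_edgeSet (hf i), fun h ↦ hfu i h.2⟩
  calc m = (Set.range f).ncard := by simp [Set.ncard_range_of_injective hinj]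
    _ ≤ _ := Set.ncard_le_ncard hrange hfin

end StarComplement

section Triangle

variable {V : Type*} {G : SimpleGraph V}

theorem mk_mem_edges_of_length_eq_three {v a b : V} {w : G.Walk v v} (hw : w.length = 3)
    (ha : a ∈ w.support) (hb : b ∈ w.support) (hab : a ≠ b) : s(a, b) ∈ w.edges := by
  match w, hw with
  | .cons _ (.cons _ (.cons _ .nil)), _ =>
    simp only [Walk.support_cons, Walk.support_nil, Walk.edges_cons, Walk.edges_nil,
      List.mem_cons, List.not_mem_nil, Sym2.eq_iff] at ha hb ⊢
    grind

theorem isNClique_three_of_length_eq_three {v : V} {w : G.Walk v v} (hw : w.length = 3) :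
    G.IsNClique 3 w.support.toFinset := by
  match w, hw with
  | .cons (v := b) hvb (.cons (v := c) hbc (.cons hcv .nil)), _ =>
    have hsupp : [v, b, c, v].toFinset = {v, b, c} := by ext; simp; tauto
    simpa [hsupp] using is3Clique_triple_iff.2 ⟨hvb, hcv.symm, hbc⟩

theorem exists_isCycle_of_isNClique_three {s : Finset V} (hs : G.IsNClique 3 s) :
    ∃ (v : V) (w : G.Walk v v), w.IsCycle ∧ w.length = 3 ∧ ∀ x, x ∈ w.support ↔ x ∈ s := by
  obtain ⟨a, b, c, hab, hac, hbc, rfl⟩ := is3Clique_iff.1 hs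
  refine ⟨a, .cons hab (.cons hbc (.cons hac.symm .nil)), ?_, rfl, fun x ↦ by simp; tauto⟩
  simp [Walk.cons_isCycle_iff, Walk.cons_isPath_iff, hab.ne, hab.ne', hac.ne, hac.ne', hbc.ne]

/-- `T` is a family of pairwise edge-disjoint triangles of `G`. Triangles are encoded by their
vertex sets, so that two of them are edge-disjoint if they share at most one vertex. -/
structure IsTrianglePacking {ι : Type*} (G : SimpleGraph V) (T : ι → Finset V) : Prop where
  isNClique : ∀ i, G.IsNClique 3 (T i)
  inter_subsingleton : Pairwise fun i j ↦ (T i ∩ T j : Set V).Subsingleton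

namespace IsTrianglePacking

variable {ι : Type*} {T : ι → Finset V}

theorem injective (hT : IsTrianglePacking G T) : Function.Injective T := by
  intro i j hij
  by_contra hne
  have hsub : (T i ∩ T j : Set V).Subsingleton := hT.inter_subsingleton hne
  rw [hij, Set.inter_self] at hsub
  have := Finset.card_le_one_iff_subsingleton.2 hsub
  simp [(hT.isNClique j).card_eq] at this

theorem hasEDC_card_add_one [Fintype ι] (hT : IsTrianglePacking G T) {v : V} {C : G.Walk v v}
    (hC : C.IsCycle) (hCT : ∀ i, ∀ e ∈ C.edges, e ∉ (T i).sym2) :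
    HasEDC G (Fintype.card ι + 1) := by
  choose b w hw _ hsupp using fun i ↦ exists_isCycle_of_isNClique_three (hT.isNClique i)
  have hedge : ∀ i, ∀ e ∈ (w i).edges, e ∈ (T i).sym2 := fun i e he ↦
    Finset.mem_sym2_iff.2 fun x hx ↦ (hsupp i x).1 (Walk.mem_support_of_mem_edges he hx)
  rw [← Fintype.card_option]
  refine HasEDC.of_fintype (fun o ↦ o.elim ⟨v, C⟩ fun i ↦ ⟨b i, w i⟩) ?_ ?_
  · rintro (_ | i)
    exacts [hC, hw i]
  · rintro (_ | i) (_ | j) hij e hi hj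
    · exact hij rfl
    · exact hCT j e hi (hedge j e hj)
    · exact hCT i e hj (hedge i e hi)
    · induction e with | _ x y
      obtain ⟨hxi, hyi⟩ := Finset.mk_mem_sym2_iff.1 (hedge i _ hi)
      obtain ⟨hxj, hyj⟩ := Finset.mk_mem_sym2_iff.1 (hedge j _ hj)
      exact ((w i).adj_of_mem_edges hi).ne
        (hT.inter_subsingleton (fun h ↦ hij (congrArg some h)) ⟨hxi, hxj⟩ ⟨hyi, hyj⟩)

end IsTrianglePacking

end Triangle

section Join

variable {V W : Type*} {H : SimpleGraph W}

theorem joinK1_adj_none_some (w : W) : (joinK1 H).Adj none (some w) := by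
  simp [joinK1]

theorem joinK1_adj_some_some {a b : W} : (joinK1 H).Adj (some a) (some b) ↔ H.Adj a b := by
  simp only [joinK1, fromRel_adj]
  grind [H.ne_of_adj, H.adj_comm]

/-- The inclusion of `H` into the cone `K₁ ∇ H`. -/
def toJoinK1 (H : SimpleGraph W) : H →g joinK1 H := ⟨some, joinK1_adj_some_some.2⟩

/-- The extension of `f : H →g G` to the cone `K₁ ∇ H` sending the apex to `u`. -/
def joinK1Lift {G : SimpleGraph V} (f : H →g G) (u : V) (hu : ∀ w, G.Adj u (f w)) :
    joinK1 H →g G where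
  toFun o := o.elim u f
  map_rel' {a b} hab := by
    cases a <;> cases b
    exacts [(hab.ne rfl).elim, hu _, (hu _).symm, f.map_adj (joinK1_adj_some_some.1 hab)]

theorem joinK1Lift_injective {G : SimpleGraph V} {f : H →g G} (hf : Function.Injective f) {u : V}
    (hu : ∀ w, G.Adj u (f w)) : Function.Injective (joinK1Lift f u hu) := by
  rintro (_ | a) (_ | b) hab
  exacts [rfl, ((hu b).ne hab).elim, ((hu a).ne' hab).elim, congrArg some (hf hab)]

theorem isNClique_insertNone {n : ℕ} {s : Finset W} (hs : H.IsNClique n s) :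
    (joinK1 H).IsNClique (n + 1) (Finset.insertNone s) := by
  refine ⟨?_, by rw [Finset.card_insertNone, hs.card_eq]⟩
  rintro (_ | a) ha (_ | b) hb hab
  · exact (hab rfl).elim
  · exact joinK1_adj_none_some b
  · exact (joinK1_adj_none_some a).symm
  · exact joinK1_adj_some_some.2 (hs.isClique (Finset.some_mem_insertNone.1 ha)
      (Finset.some_mem_insertNone.1 hb) (by simpa using hab))

theorem isNClique_map_some {n : ℕ} {s : Finset W} (hs : H.IsNClique n s) :
    (joinK1 H).IsNClique n (s.map .some) :=
  hs.map.mono ((map_le_iff_le_comap _ _ _).2 fun _ _ ↦ joinK1_adj_some_some.2)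

end Join

section Switching

variable {W ι : Type*} {H : SimpleGraph W} {T : ι → Finset W}

/-- The triangles of the cone `K₁ ∇ H` obtained from the triangles `T` of `H` by replacing `T i`
with the triangle spanned by the apex and `P i`, for each `i ∈ S`. -/
noncomputable def switch (S : Set ι) (P T : ι → Finset W) (i : ι) : Finset (Option W) :=
  if i ∈ S then Finset.insertNone (P i) else (T i).map .some

variable {S : Set ι} {P : ι → Finset W}

theorem none_mem_switch {i : ι} : none ∈ switch S P T i ↔ i ∈ S := by
  unfold switch
  split_ifs with hi <;> simp [hi]

theorem some_mem_switch {i : ι} {a : W} :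
    some a ∈ switch S P T i ↔ if i ∈ S then a ∈ P i else a ∈ T i := by
  unfold switch
  split_ifs <;> simp

theorem mem_of_some_mem_switch (hPT : ∀ i ∈ S, P i ⊆ T i) {i : ι} {a : W}
    (ha : some a ∈ switch S P T i) : a ∈ T i := by
  by_cases hi : i ∈ S
  · exact hPT i hi (by simpa [some_mem_switch, hi] using ha)
  · simpa [some_mem_switch, hi] using ha

theorem isNClique_switch {i : ι} (hT : H.IsNClique 3 (T i)) (hPT : ∀ i ∈ S, P i ⊆ T i)
    (hP : ∀ i ∈ S, (P i).card = 2) : (joinK1 H).IsNClique 3 (switch S P T i) := by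
  by_cases hi : i ∈ S
  · have hPi : H.IsNClique 2 (P i) := ⟨hT.isClique.subset (hPT i hi), hP i hi⟩
    simpa [switch, hi] using isNClique_insertNone hPi
  · simpa [switch, hi] using isNClique_map_some hT

theorem isTrianglePacking_switch (hT : IsTrianglePacking H T) (hPT : ∀ i ∈ S, P i ⊆ T i)
    (hP : ∀ i ∈ S, (P i).card = 2) (hPdisj : S.PairwiseDisjoint P) :
    IsTrianglePacking (joinK1 H) (switch S P T) := by
  refine ⟨fun i ↦ isNClique_switch (hT.isNClique i) hPT hP, ?_⟩
  have apex_only : ∀ {i j a}, i ≠ j → none ∈ switch S P T i → none ∈ switch S P T j →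
      some a ∈ switch S P T i → some a ∉ switch S P T j := by
    intro i j a hij hi hj hai haj
    rw [none_mem_switch] at hi hj
    rw [some_mem_switch, if_pos ‹_›] at hai haj
    exact Finset.disjoint_left.1 (hPdisj hi hj hij) hai haj
  rintro i j hij (_ | a) ⟨hai, haj⟩ (_ | b) ⟨hbi, hbj⟩
  · rfl
  · exact (apex_only hij hai haj hbi hbj).elim
  · exact (apex_only hij hbi hbj hai haj).elim
  · exact congrArg some (hT.inter_subsingleton hij
      ⟨mem_of_some_mem_switch hPT hai, mem_of_some_mem_switch hPT haj⟩
      ⟨mem_of_some_mem_switch hPT hbi, mem_of_some_mem_switch hPT hbj⟩)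

theorem hasEDC_joinK1_of_switch [Fintype ι] (hT : IsTrianglePacking H T)
    (hPT : ∀ i ∈ S, P i ⊆ T i) (hP : ∀ i ∈ S, (P i).card = 2)
    (hPdisj : S.PairwiseDisjoint P) {v : W} {C : H.Walk v v} (hC : C.IsCycle)
    (hCT : ∀ i ∉ S, ∀ e ∈ C.edges, e ∉ (T i).sym2)
    (hCP : ∀ i ∈ S, ∀ e ∈ C.edges, e ∉ (P i).sym2) :
    HasEDC (joinK1 H) (Fintype.card ι + 1) := by
  refine (isTrianglePacking_switch hT hPT hP hPdisj).hasEDC_card_add_one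
    (hC.map (f := toJoinK1 H) (Option.some_injective W)) fun i e he heQ ↦ ?_
  rw [Walk.edges_map, List.mem_map] at he
  obtain ⟨⟨a, b⟩, he, rfl⟩ := he
  obtain ⟨ha, hb⟩ := Finset.mk_mem_sym2_iff.1 heQ
  replace ha := some_mem_switch.1 ha
  replace hb := some_mem_switch.1 hb
  split_ifs at ha hb with hi
  · exact hCP i hi _ he (Finset.mk_mem_sym2_iff.2 ⟨ha, hb⟩)
  · exact hCT i hi _ he (Finset.mk_mem_sym2_iff.2 ⟨ha, hb⟩)

/-- The indices of the members of `T` that contain an edge of the walk `C`. -/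
def membersAlong (T : ι → Finset W) {a b : W} (C : H.Walk a b) : Set ι :=
  {i | ∃ e ∈ C.edges, e ∈ (T i).sym2}

theorem eq_of_snd_eq_of_mem_darts {v : W} {C : H.Walk v v} (hC : C.IsCycle) {d d' : H.Dart}
    (hd : d ∈ C.darts) (hd' : d' ∈ C.darts) (h : d.snd = d'.snd) : d = d' :=
  List.inj_on_of_nodup_map (f := (·.snd)) (C.map_snd_darts ▸ hC.support_nodup) hd hd' h

theorem exists_injOn_membersAlong (hT : IsTrianglePacking H T) {v : W} {C : H.Walk v v}
    (hC : C.IsCycle) : ∃ a : ι → W, Set.InjOn a (membersAlong T C) ∧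
      ∀ i ∈ membersAlong T C, a i ∈ T i ∧ a i ∈ C.support := by
  have hdart : ∀ i ∈ membersAlong T C, ∃ d ∈ C.darts, d.edge ∈ (T i).sym2 := by
    rintro i ⟨e, he, hei⟩
    obtain ⟨d, hd, rfl⟩ := List.mem_map.1 he
    exact ⟨d, hd, hei⟩
  have : Nonempty H.Dart := ⟨⟨(v, C.snd), C.adj_snd hC.not_nil⟩⟩
  choose! d hd hdT using hdart
  refine ⟨fun i ↦ (d i).snd, fun i hi j hj hij ↦ ?_, fun i hi ↦
    ⟨(Finset.mk_mem_sym2_iff.1 (hdT i hi)).2, C.dart_snd_mem_support_of_mem_darts (hd i hi)⟩⟩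
  have hdij : d i = d j := eq_of_snd_eq_of_mem_darts hC (hd i hi) (hd j hj) hij
  obtain ⟨hfi, hsi⟩ := Finset.mk_mem_sym2_iff.1 (hdT i hi)
  obtain ⟨hfj, hsj⟩ := Finset.mk_mem_sym2_iff.1 (hdij ▸ hdT j hj)
  by_contra hne
  exact (d i).fst_ne_snd (hT.inter_subsingleton hne ⟨hfi, hfj⟩ ⟨hsi, hsj⟩)

theorem hasEDC_joinK1_of_isCycle [Fintype ι] (hT : IsTrianglePacking H T)
    {v : W} {C : H.Walk v v} (hC : C.IsCycle)
    (hoff : ∀ i ∈ membersAlong T C, ∃ b ∈ T i, b ∉ C.support)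
    (hmeet : (membersAlong T C).Pairwise fun i j ↦ ∀ w ∈ T i, w ∈ T j → w ∈ C.support) :
    HasEDC (joinK1 H) (Fintype.card ι + 1) := by
  obtain ⟨a, hainj, ha⟩ := exists_injOn_membersAlong hT hC
  have : Nonempty W := ⟨v⟩
  choose! b hbT hbC using hoff
  have hab : ∀ i ∈ membersAlong T C, ∀ j ∈ membersAlong T C, a i ≠ b j :=
    fun i hi j hj h ↦ hbC j hj (h ▸ (ha i hi).2)
  have hbinj : Set.InjOn b (membersAlong T C) := fun i hi j hj h ↦ of_not_not fun hij ↦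
    hbC i hi (hmeet hi hj hij _ (hbT i hi) (h ▸ hbT j hj))
  refine hasEDC_joinK1_of_switch (S := membersAlong T C) (P := fun i ↦ {a i, b i})
    hT ?_ ?_ ?_ hC (fun i hi e he heT ↦ hi ⟨e, he, heT⟩) ?_
  · intro i hi
    simpa [Finset.insert_subset_iff, hbT i hi] using (ha i hi).1
  · exact fun i hi ↦ Finset.card_pair (hab i hi i hi)
  · intro i hi j hj hij
    simp [Function.onFun, hainj.ne hj hi hij.symm, hbinj.ne hj hi hij.symm, hab j hj i hi,
      (hab i hi j hj).symm]
  · rintro i hi ⟨x, y⟩ he hP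
    have hx := C.fst_mem_support_of_mem_edges he
    have hy := C.snd_mem_support_of_mem_edges he
    have hxy := (C.adj_of_mem_edges he).ne
    have := hbC i hi
    simp only [Finset.mk_mem_sym2_iff, Finset.mem_insert, Finset.mem_singleton] at hP
    grind

end Switching

section Geodesic

variable {V : Type*} {K : SimpleGraph V} {x y : V} {p : K.Walk x y}

theorem dist_add_dist_of_mem_support (hp : p.length = K.dist x y) {c : V} (hc : c ∈ p.support) :
    K.dist x c + K.dist c y = K.dist x y := by
  rw [← length_eq_dist_of_subwalk hp (p.isSubwalk_takeUntil hc),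
    ← length_eq_dist_of_subwalk hp (p.isSubwalk_dropUntil hc), ← Walk.length_append,
    p.take_spec, hp]

theorem injOn_dist_support (hp : p.length = K.dist x y) :
    Set.InjOn (K.dist x) {c | c ∈ p.support} := by
  have hget : ∀ c ∈ p.support, p.getVert (K.dist x c) = c := fun c hc ↦ by
    rw [← length_eq_dist_of_subwalk hp (p.isSubwalk_takeUntil hc), Walk.getVert_length_takeUntil]
  exact fun a ha b hb hab ↦ by rw [← hget a ha, hab, hget b hb]

theorem exists_mem_notMem_support_of_isNClique_three (hp : p.length = K.dist x y) {s : Finset V}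
    (hs : K.IsNClique 3 s) : ∃ c ∈ s, c ∉ p.support := by
  by_contra! hsupp
  obtain ⟨a, b, c, hab, hac, hbc, rfl⟩ := is3Clique_iff.1 hs
  simp only [Finset.forall_mem_insert, Finset.mem_singleton, forall_eq] at hsupp
  obtain ⟨ha, hb, hc⟩ := hsupp
  have hne := (injOn_dist_support hp).ne ha hb hab.ne
  have hne' := (injOn_dist_support hp).ne ha hc hac.ne
  have hne'' := (injOn_dist_support hp).ne hb hc hbc.ne
  have := hab.diff_dist_adj (u := x)
  have := hac.diff_dist_adj (u := x)
  have := hbc.diff_dist_adj (u := x)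
  lia

theorem card_le_three_of_subset_support (hp : p.length = K.dist x y) {w : V} {s : Finset V}
    (hadj : ∀ a ∈ s, K.Adj w a) (hs : ∀ a ∈ s, a ∈ p.support) : s.card ≤ 3 := by
  have himage : s.image (K.dist x) ⊆ Finset.Icc (K.dist x w - 1) (K.dist x w + 1) := by
    intro n hn
    obtain ⟨a, ha, rfl⟩ := Finset.mem_image.1 hn
    have := (hadj a ha).diff_dist_adj (u := x)
    exact Finset.mem_Icc.2 (by lia)
  calc s.card = (s.image (K.dist x)).card :=
        (Finset.card_image_of_injOn ((injOn_dist_support hp).mono hs)).symm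
    _ ≤ (Finset.Icc (K.dist x w - 1) (K.dist x w + 1)).card := Finset.card_le_card himage
    _ ≤ 3 := by rw [Nat.card_Icc]; lia

theorem mem_support_of_isClique_of_isClique (hp : p.length = K.dist x y) {s t : Finset V}
    (hs : K.IsClique s) (ht : K.IsClique t) (hst : (s ∩ t : Set V).Subsingleton)
    (hsp : 1 < {a ∈ s | a ∈ p.support}.card) (htp : 1 < {a ∈ t | a ∈ p.support}.card)
    {w : V} (hws : w ∈ s) (hwt : w ∈ t) : w ∈ p.support := by
  by_contra hwp
  have ne_w : ∀ {a}, a ∈ p.support → w ≠ a := fun ha h ↦ hwp (h ▸ ha)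
  have hdisj : Disjoint {a ∈ s | a ∈ p.support} {a ∈ t | a ∈ p.support} := by
    refine Finset.disjoint_left.2 fun a has hat ↦ ?_
    simp only [Finset.mem_filter] at has hat
    exact ne_w has.2 (hst ⟨hws, hwt⟩ ⟨has.1, hat.1⟩)
  have hcard : ({a ∈ s | a ∈ p.support} ∪ {a ∈ t | a ∈ p.support}).card ≤ 3 := by
    refine card_le_three_of_subset_support hp (w := w) ?_ ?_ <;>
      simp only [Finset.mem_union, Finset.mem_filter]
    · rintro a (⟨ha, hap⟩ | ⟨ha, hap⟩)
      exacts [hs hws ha (ne_w hap), ht hwt ha (ne_w hap)]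
    · rintro a (⟨_, hap⟩ | ⟨_, hap⟩) <;> exact hap
  rw [Finset.card_union_of_disjoint hdisj] at hcard
  lia

/-- `p` joins two distinct vertices of `s`, and no walk of `K` that does so is shorter. -/
structure IsShortestConnector (s : Set V) (p : K.Walk x y) : Prop where
  left_mem : x ∈ s
  right_mem : y ∈ s
  ne : x ≠ y
  length_le : ∀ ⦃a b⦄, a ∈ s → b ∈ s → a ≠ b → ∀ q : K.Walk a b, p.length ≤ q.length

theorem exists_isShortestConnector {s : Set V} (hs : ¬ s.Pairwise fun a b ↦ ¬ K.Reachable a b) :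
    ∃ (x y : V) (p : K.Walk x y), IsShortestConnector s p := by
  let IsLength (n : ℕ) : Prop :=
    ∃ a ∈ s, ∃ b ∈ s, a ≠ b ∧ ∃ q : K.Walk a b, q.length = n
  have hex : ∃ n, IsLength n := by
    simp only [Set.Pairwise, not_forall, not_not] at hs
    obtain ⟨a, ha, b, hb, hab, ⟨q⟩⟩ := hs
    exact ⟨_, a, ha, b, hb, hab, q, rfl⟩
  obtain ⟨x, hx, y, hy, hxy, p, hp⟩ := Nat.find_spec hex
  exact ⟨x, y, p, hx, hy, hxy, fun a b ha hb hab q ↦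
    hp ▸ Nat.find_min' hex ⟨a, ha, b, hb, hab, q, rfl⟩⟩

namespace IsShortestConnector

variable {s : Set V}

theorem dist_le (hp : IsShortestConnector s p) {a b : V} (ha : a ∈ s) (hb : b ∈ s) (hab : a ≠ b)
    (hr : K.Reachable a b) : p.length ≤ K.dist a b := by
  obtain ⟨q, hq⟩ := hr.exists_walk_length_eq_dist
  exact hq ▸ hp.length_le ha hb hab q

theorem length_eq_dist (hp : IsShortestConnector s p) : p.length = K.dist x y :=
  (hp.dist_le hp.left_mem hp.right_mem hp.ne p.reachable).antisymm (SimpleGraph.dist_le p)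

theorem eq_or_eq_of_mem_support (hp : IsShortestConnector s p) {z : V} (hz : z ∈ s)
    (hzp : z ∈ p.support) : z = x ∨ z = y := by
  by_contra! hne
  have hxz := hp.dist_le hp.left_mem hz hne.1.symm (p.takeUntil z hzp).reachable
  have hzy := hp.dist_le hz hp.right_mem hne.2 (p.dropUntil z hzp).reachable
  have hsum := dist_add_dist_of_mem_support hp.length_eq_dist hzp
  have hpos := p.reachable.pos_dist_of_ne hp.ne
  have hlen := hp.length_eq_dist
  lia

theorem not_adj_adj_of_mem (hp : IsShortestConnector s p) (hxy : ¬ K.Adj x y) {z a b : V}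
    (hz : z ∈ s) (hzp : z ∉ p.support) (ha : a ∈ p.support) (hb : b ∈ p.support) (hab : a ≠ b)
    (haz : K.Adj a z) : ¬ K.Adj b z := by
  intro hbz
  have hlen := hp.length_eq_dist
  have hlt := p.reachable.one_lt_dist_of_ne_of_not_adj hp.ne hxy
  -- `z` is joined to `x` and `y` through `c`, which by minimality of `p` leaves room for `c` only
  -- in the middle of a walk of length two.
  have near_middle : ∀ c ∈ p.support, K.Adj c z → K.dist x c = 1 ∧ K.dist x y = 2 := by
    intro c hc hcz
    have hxc := (p.takeUntil c hc).reachable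
    have hcy := (p.dropUntil c hc).reachable
    have hxz := hp.dist_le hp.left_mem hz (fun h ↦ hzp (h ▸ p.start_mem_support))
      (hxc.trans hcz.reachable)
    have hzy := hp.dist_le hz hp.right_mem (fun h ↦ hzp (h ▸ p.end_mem_support))
      (hcz.symm.reachable.trans hcy)
    have hsum := dist_add_dist_of_mem_support hlen hc
    have hxcz := hxc.dist_triangle_left z
    have hzcy := hcy.dist_triangle_right z
    have hcz1 := dist_eq_one_iff_adj.2 hcz
    have hzc1 := dist_eq_one_iff_adj.2 hcz.symm
    lia
  exact hab (injOn_dist_support hlen ha hb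
    ((near_middle a ha haz).1.trans (near_middle b hb hbz).1.symm))

theorem mem_support_of_isClique (hp : IsShortestConnector s p) (hxy : ¬ K.Adj x y) {t : Finset V}
    (ht : K.IsClique t) (htp : 1 < {a ∈ t | a ∈ p.support}.card) {w : V} (hws : w ∈ s)
    (hwt : w ∈ t) : w ∈ p.support := by
  obtain ⟨a, ha, b, hb, hab⟩ := Finset.one_lt_card.1 htp
  simp only [Finset.mem_filter] at ha hb
  by_contra hwp
  exact hp.not_adj_adj_of_mem hxy hws hwp ha.2 hb.2 hab
    (ht ha.1 hwt fun h ↦ hwp (h ▸ ha.2)) (ht hb.1 hwt fun h ↦ hwp (h ▸ hb.2))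

end IsShortestConnector

end Geodesic

section Decomposition

variable {W ι : Type*} {H : SimpleGraph W} {T : ι → Finset W}

/-- The edge set of `H` is the disjoint union of the edge sets of the triangles `T`. -/
structure IsTriangleDecomposition (H : SimpleGraph W) (T : ι → Finset W) : Prop
    extends IsTrianglePacking H T where
  exists_mem_of_adj : ∀ ⦃a b⦄, H.Adj a b → ∃ i, a ∈ T i ∧ b ∈ T i

theorem IsTrianglePacking.isNClique_deleteEdges (hT : IsTrianglePacking H T) {i j : ι}
    (hij : i ≠ j) : (H.deleteEdges (T j : Set W).sym2).IsNClique 3 (T i) := by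
  refine ⟨fun a ha b hb hab ↦ deleteEdges_adj.2 ⟨(hT.isNClique i).isClique ha hb hab, ?_⟩,
    (hT.isNClique i).card_eq⟩
  rintro ⟨haj, hbj⟩
  exact hab (hT.inter_subsingleton hij ⟨ha, haj⟩ ⟨hb, hbj⟩)

variable {j : ι} {x y : W} {p : (H.deleteEdges (T j : Set W).sym2).Walk x y}

theorem IsTrianglePacking.one_lt_card_of_mem_membersAlong (hT : IsTrianglePacking H T)
    (hx : x ∈ T j) (hy : y ∈ T j) (hyx : H.Adj y x) {i : ι} (hij : i ≠ j)
    (hi : i ∈ membersAlong T (Walk.cons hyx (p.mapLe (deleteEdges_le _)))) :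
    1 < {a ∈ T i | a ∈ p.support}.card := by
  obtain ⟨⟨a, b⟩, he, hei⟩ := hi
  obtain ⟨ha, hb⟩ := Finset.mk_mem_sym2_iff.1 hei
  rw [Walk.edges_cons, List.mem_cons, Walk.edges_mapLe_eq_edges] at he
  obtain heq | hep := he
  · refine (hyx.ne (hT.inter_subsingleton hij ⟨?_, hy⟩ ⟨?_, hx⟩)).elim <;>
      obtain ⟨rfl, rfl⟩ | ⟨rfl, rfl⟩ := Sym2.eq_iff.1 heq <;> assumption
  · exact Finset.one_lt_card.2 ⟨a, by simp [ha, p.fst_mem_support_of_mem_edges hep],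
      b, by simp [hb, p.snd_mem_support_of_mem_edges hep], (p.adj_of_mem_edges hep).ne⟩

theorem isCycle_cons_of_isShortestConnector (hp : IsShortestConnector (T j : Set W) p)
    (hyx : H.Adj y x) : (Walk.cons hyx (p.mapLe (deleteEdges_le _))).IsCycle := by
  refine Walk.cons_isCycle_iff _ _ |>.2 ⟨?_, ?_⟩
  · exact (Walk.isPath_of_length_eq_dist p hp.length_eq_dist).mapLe _
  · rw [Walk.edges_mapLe_eq_edges]
    exact fun h ↦ (deleteEdges_adj.1 (p.adj_of_mem_edges h)).2 ⟨hp.right_mem, hp.left_mem⟩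

theorem IsTrianglePacking.hasEDC_joinK1_of_isShortestConnector [Fintype ι]
    (hT : IsTrianglePacking H T) (hp : IsShortestConnector (T j : Set W) p) :
    HasEDC (joinK1 H) (Fintype.card ι + 1) := by
  have hyx : H.Adj y x := (hT.isNClique j).isClique hp.right_mem hp.left_mem hp.ne.symm
  have hxy : ¬ (H.deleteEdges (T j : Set W).sym2).Adj x y := fun h ↦
    (deleteEdges_adj.1 h).2 ⟨hp.left_mem, hp.right_mem⟩
  have hsupp : ∀ w, w ∈ (Walk.cons hyx (p.mapLe (deleteEdges_le _))).support ↔ w ∈ p.support := by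
    intro w
    simp only [Walk.support_cons, Walk.support_mapLe_eq_support, List.mem_cons,
      or_iff_right_iff_imp]
    rintro rfl
    exact p.end_mem_support
  have hclique := fun {i} (hij : i ≠ j) ↦ (hT.isNClique_deleteEdges hij).isClique
  have hone := fun {i} ↦
    hT.one_lt_card_of_mem_membersAlong (p := p) hp.left_mem hp.right_mem hyx (i := i)
  refine hasEDC_joinK1_of_isCycle hT (isCycle_cons_of_isShortestConnector hp hyx) ?_ ?_ <;>
    simp only [hsupp]
  · intro i _
    by_cases hij : i = j
    · obtain ⟨z, hz, hzxy⟩ := Finset.exists_mem_notMem_of_card_lt_card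
        (s := {x, y}) (t := T i) (Finset.card_le_two.trans_lt (by simp [(hT.isNClique i).card_eq]))
      exact ⟨z, hz, fun hzp ↦ hzxy (by simpa using hp.eq_or_eq_of_mem_support (hij ▸ hz) hzp)⟩
    · exact exists_mem_notMem_support_of_isNClique_three hp.length_eq_dist
        (hT.isNClique_deleteEdges hij)
  · intro i hi i' hi' hii' w hwi hwi'
    by_cases hij : i = j
    · subst hij
      exact hp.mem_support_of_isClique hxy (hclique hii'.symm) (hone hii'.symm hi') hwi hwi'
    by_cases hi'j : i' = j
    · subst hi'j
      exact hp.mem_support_of_isClique hxy (hclique hij) (hone hij hi) hwi' hwi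
    · exact mem_support_of_isClique_of_isClique hp.length_eq_dist (hclique hij) (hclique hi'j)
        (hT.inter_subsingleton hii') (hone hij hi) (hone hi'j hi') hwi hwi'

theorem IsTrianglePacking.pairwise_not_reachable [Fintype ι] (hT : IsTrianglePacking H T)
    (hno : ¬ HasEDC (joinK1 H) (Fintype.card ι + 1)) (j : ι) :
    (T j : Set W).Pairwise fun a b ↦ ¬ (H.deleteEdges (T j : Set W).sym2).Reachable a b := by
  by_contra hreach
  obtain ⟨x, y, p, hp⟩ := exists_isShortestConnector hreach
  exact hno (hT.hasEDC_joinK1_of_isShortestConnector hp)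

end Decomposition

section Separation

variable {W : Type*} {H : SimpleGraph W} {s : Set W}

theorem exists_mem_support_reachable_deleteEdges_sym2 {v b : W} (hb : b ∈ s) (q : H.Walk v b) :
    ∃ z ∈ s, z ∈ q.support ∧ (H.deleteEdges s.sym2).Reachable v z := by
  induction q with
  | nil => exact ⟨_, hb, by simp, .rfl⟩
  | @cons v v' _ h q ih =>
    by_cases hv : v ∈ s
    · exact ⟨v, hv, by simp, .rfl⟩
    · obtain ⟨z, hz, hzq, hr⟩ := ih hb
      have hvv' : (H.deleteEdges s.sym2).Adj v v' := deleteEdges_adj.2 ⟨h, fun hs ↦ hv hs.1⟩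
      exact ⟨z, hz, by simp [hzq], hvv'.reachable.trans hr⟩

theorem mem_of_mem_support_of_isPath
    (hs : s.Pairwise fun a b ↦ ¬ (H.deleteEdges s.sym2).Reachable a b) {a b : W} {p : H.Walk a b}
    (hp : p.IsPath) (ha : a ∈ s) (hb : b ∈ s) {z : W} (hz : z ∈ p.support) : z ∈ s := by
  induction p with
  | nil => simp_all
  | @cons a v b h p ih =>
    obtain ⟨hp, hap⟩ := Walk.cons_isPath_iff _ _ |>.1 hp
    have hv : v ∈ s := by
      by_contra hv
      obtain ⟨y, hy, hyp, hr⟩ := exists_mem_support_reachable_deleteEdges_sym2 hb p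
      have hav : (H.deleteEdges s.sym2).Adj a v := deleteEdges_adj.2 ⟨h, fun hs ↦ hv hs.2⟩
      exact hs ha hy (fun hay ↦ hap (hay ▸ hyp)) (hav.reachable.trans hr)
    obtain rfl | hz := List.mem_cons.1 (Walk.support_cons h p ▸ hz)
    · exact ha
    · exact ih hp hv hb hz

end Separation

section Cactus

variable {W ι : Type*} {H : SimpleGraph W} {T : ι → Finset W}

namespace IsTriangleDecomposition

theorem of_walks (c : ι → Σ v : W, H.Walk v v) (hlen : ∀ i, (c i).2.length = 3)
    (hdisj : Pairwise fun i j ↦ List.Disjoint (c i).2.edges (c j).2.edges)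
    (hcover : ∀ e ∈ H.edgeSet, ∃ i, e ∈ (c i).2.edges) :
    IsTriangleDecomposition H fun i ↦ (c i).2.support.toFinset where
  isNClique i := isNClique_three_of_length_eq_three (hlen i)
  inter_subsingleton i j hij a ha b hb := by
    by_contra hab
    simp only [List.coe_toFinset, Set.mem_inter_iff, Set.mem_ofPred_eq] at ha hb
    exact hdisj hij (mk_mem_edges_of_length_eq_three (hlen i) ha.1 hb.1 hab)
      (mk_mem_edges_of_length_eq_three (hlen j) ha.2 hb.2 hab)
  exists_mem_of_adj a b hab := by
    obtain ⟨i, hi⟩ := hcover s(a, b) hab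
    exact ⟨i, by simpa using Walk.fst_mem_support_of_mem_edges _ hi,
      by simpa using Walk.snd_mem_support_of_mem_edges _ hi⟩

theorem finite_edgeSet [Finite ι] (hT : IsTriangleDecomposition H T) : H.edgeSet.Finite := by
  refine (Set.finite_iUnion fun i ↦ (T i).sym2.finite_toSet).subset ?_
  rintro ⟨a, b⟩ hab
  obtain ⟨i, ha, hb⟩ := hT.exists_mem_of_adj hab
  exact Set.mem_iUnion.2 ⟨i, Finset.mk_mem_sym2_iff.2 ⟨ha, hb⟩⟩

theorem exists_adj_adj_of_adj (hT : IsTriangleDecomposition H T) ⦃a b : W⦄ (hab : H.Adj a b) :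
    ∃ c, H.Adj a c ∧ H.Adj b c := by
  obtain ⟨i, ha, hb⟩ := hT.exists_mem_of_adj hab
  obtain ⟨c, hc, hcab⟩ := Finset.exists_mem_notMem_of_card_lt_card (s := {a, b}) (t := T i)
    (Finset.card_le_two.trans_lt (by simp [(hT.isNClique i).card_eq]))
  simp only [Finset.mem_insert, Finset.mem_singleton, not_or] at hcab
  exact ⟨c, (hT.isNClique i).isClique ha hc (Ne.symm hcab.1),
    (hT.isNClique i).isClique hb hc (Ne.symm hcab.2)⟩

variable [Fintype ι]

theorem exists_support_subset_of_isCycle (hT : IsTriangleDecomposition H T)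
    (hno : ¬ HasEDC (joinK1 H) (Fintype.card ι + 1)) {v : W} {C : H.Walk v v} (hC : C.IsCycle) :
    ∃ i, ∀ z ∈ C.support, z ∈ T i := by
  cases C with
  | nil => exact (hC.not_nil .nil).elim
  | @cons _ a _ h p =>
    obtain ⟨i, hv, ha⟩ := hT.exists_mem_of_adj h
    have hp : ∀ z ∈ p.support, z ∈ T i := fun z ↦
      mem_of_mem_support_of_isPath (hT.pairwise_not_reachable hno i)
        (Walk.cons_isCycle_iff _ _ |>.1 hC).1 ha hv
    exact ⟨i, List.forall_mem_cons.2 ⟨hv, hp⟩⟩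

theorem length_eq_three_of_isCycle (hT : IsTriangleDecomposition H T)
    (hno : ¬ HasEDC (joinK1 H) (Fintype.card ι + 1)) {v : W} {C : H.Walk v v} (hC : C.IsCycle) :
    C.length = 3 := by
  obtain ⟨i, hi⟩ := hT.exists_support_subset_of_isCycle hno hC
  refine le_antisymm ?_ hC.three_le_length
  calc C.length = C.support.tail.toFinset.card := by
        simp [List.toFinset_card_of_nodup hC.support_nodup]
    _ ≤ (T i).card := Finset.card_le_card fun z hz ↦
        hi z (List.mem_of_mem_tail (List.mem_toFinset.1 hz))
    _ = 3 := (hT.isNClique i).card_eq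

theorem exists_eq_of_isNClique_three (hT : IsTriangleDecomposition H T)
    (hno : ¬ HasEDC (joinK1 H) (Fintype.card ι + 1)) {s : Finset W} (hs : H.IsNClique 3 s) :
    ∃ i, T i = s := by
  obtain ⟨v, C, hC, _, hsupp⟩ := exists_isCycle_of_isNClique_three hs
  obtain ⟨i, hi⟩ := hT.exists_support_subset_of_isCycle hno hC
  exact ⟨i, (Finset.eq_of_subset_of_card_le (fun z hz ↦ hi z ((hsupp z).2 hz))
    (by rw [hs.card_eq, (hT.isNClique i).card_eq])).symm⟩

theorem triCount_eq_card (hT : IsTriangleDecomposition H T)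
    (hno : ¬ HasEDC (joinK1 H) (Fintype.card ι + 1)) : triCount H = Fintype.card ι := by
  rw [← Nat.card_eq_fintype_card]
  refine (Nat.card_eq_of_bijective (fun i ↦ ⟨T i, hT.isNClique i⟩) ⟨fun i j hij ↦ ?_, ?_⟩).symm
  · exact hT.toIsTrianglePacking.injective (congrArg Subtype.val hij)
  · rintro ⟨s, hs⟩
    exact (hT.exists_eq_of_isNClique_three hno hs).imp fun i hi ↦ Subtype.ext hi

end IsTriangleDecomposition

theorem isTriangleCactus_induce_supp
    (htriangle : ∀ ⦃a b⦄, H.Adj a b → ∃ c, H.Adj a c ∧ H.Adj b c)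
    (hcycle : ∀ (v : W) (w : H.Walk v v), w.IsCycle → w.length = 3) (K : H.ConnectedComponent) :
    IsTriangleCactus (H.induce K.supp) := by
  refine ⟨K.maximal_connected_induce_supp.prop, ?_, fun v w hw ↦ ?_⟩
  · rintro ⟨a, b⟩ hab
    replace hab : (H.induce K.supp).Adj a b := hab
    obtain ⟨c, hac, hbc⟩ := htriangle hab
    have hc : c ∈ K.supp := K.mem_supp_of_adj_mem_supp a.2 hac
    have hclique : (H.induce K.supp).IsNClique 3 {a, b, ⟨c, hc⟩} :=
      is3Clique_triple_iff.2 ⟨hab, hac, hbc⟩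
    obtain ⟨v, w, hw, hlen, hsupp⟩ := exists_isCycle_of_isNClique_three hclique
    exact ⟨v, w, hw, mk_mem_edges_of_length_eq_three hlen ((hsupp a).2 (by simp))
      ((hsupp b).2 (by simp)) hab.ne⟩
  · have hwH := hw.map (f := (Embedding.induce K.supp).toHom) Subtype.val_injective
    exact w.length_map _ ▸ hcycle _ _ hwH

end Cactus

section Main

variable {V : Type*} {G : SimpleGraph V}

theorem edgeSet_diff_incidenceSet_subset (u : V) :
    G.edgeSet \ G.incidenceSet u ⊆ Sym2.map (↑) '' (G.induce ({u}ᶜ : Set V)).edgeSet := by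
  rintro ⟨a, b⟩ ⟨hab, hu⟩
  have hne : a ≠ u ∧ b ≠ u := by
    constructor <;> rintro rfl <;> exact hu ⟨hab, by simp⟩
  exact ⟨s(⟨a, hne.1⟩, ⟨b, hne.2⟩), hab, rfl⟩

theorem triangleCactus_structure_general {t : ℕ} (G : SimpleGraph V) (u : V)
    (hu : ∀ v, v ≠ u → G.Adj u v) (hphi : phi G ≤ t)
    (hdecomp : ∃ c : Fin t → Σ v : ({u}ᶜ : Set V), (G.induce ({u}ᶜ : Set V)).Walk v v,
      (∀ i, (c i).2.IsCycle ∧ (c i).2.length = 3) ∧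
      (∀ i j, i ≠ j → ∀ e ∈ (c i).2.edges, e ∉ (c j).2.edges) ∧
      (∀ e ∈ (G.induce ({u}ᶜ : Set V)).edgeSet, ∃ i, e ∈ (c i).2.edges)) :
    (∀ c : (G.induce ({u}ᶜ : Set V)).ConnectedComponent,
      IsTriangleCactus ((G.induce ({u}ᶜ : Set V)).induce c.supp)) ∧
    triCount (G.induce ({u}ᶜ : Set V)) = t ∧ phi G = t := by
  obtain ⟨c, hc, hdisj, hcover⟩ := hdecomp
  have hT := IsTriangleDecomposition.of_walks c (fun i ↦ (hc i).2) (fun i j hij _ ↦ hdisj i j hij _)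
    hcover
  have hbdd : BddAbove {m | HasEDC G m} := bddAbove_hasEDC (u := u)
    ((hT.finite_edgeSet.image _).subset (edgeSet_diff_incidenceSet_subset u))
  let f : G.induce ({u}ᶜ : Set V) →g G := (Embedding.induce _).toHom
  have hf : Function.Injective f := Subtype.val_injective
  have hle : t ≤ phi G := le_csSup hbdd (HasEDC.map ⟨c, fun i ↦ (hc i).1, hdisj⟩ f hf)
  have hno : ¬ HasEDC (joinK1 (G.induce ({u}ᶜ : Set V))) (Fintype.card (Fin t) + 1) := fun h ↦ by
    have hsucc := le_csSup hbdd (h.map _ (joinK1Lift_injective hf fun w ↦ hu w w.2))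
    exact absurd (hsucc.trans hphi) (by simp)
  exact ⟨isTriangleCactus_induce_supp hT.exists_adj_adj_of_adj fun _ _ ↦
    hT.length_eq_three_of_isCycle hno, by simpa using hT.triCount_eq_card hno, hphi.antisymm hle⟩

end Main

/-- If `G` has a dominating vertex `u*`, `φ(G) ≤ k-1`, and the edge set of `G - u*` is the
union of `k-1` pairwise edge-disjoint triangles, then every non-trivial component of
`G - u*` is a triangle-cactus, `t(G - u*) = k-1` and `φ(G) = k-1`. -/
theorem triangleCactus_structure {V : Type*} [Fintype V] (k : ℕ) (hk : 1 ≤ k)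
    (G : SimpleGraph V) (u : V) (hu : ∀ v, v ≠ u → G.Adj u v) (hphi : phi G ≤ k - 1)
    (hdecomp : ∃ c : Fin (k - 1) → Σ v : ({u}ᶜ : Set V), (G.induce ({u}ᶜ : Set V)).Walk v v,
      (∀ i, (c i).2.IsCycle ∧ (c i).2.length = 3) ∧
      (∀ i j, i ≠ j → ∀ e ∈ (c i).2.edges, e ∉ (c j).2.edges) ∧
      (∀ e ∈ (G.induce ({u}ᶜ : Set V)).edgeSet, ∃ i, e ∈ (c i).2.edges)) :
    (∀ c : (G.induce ({u}ᶜ : Set V)).ConnectedComponent, c.supp.Nontrivial →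
      IsTriangleCactus ((G.induce ({u}ᶜ : Set V)).induce c.supp)) ∧
    triCount (G.induce ({u}ᶜ : Set V)) = k - 1 ∧ phi G = k - 1 := by
  obtain ⟨hcactus, h⟩ := triangleCactus_structure_general G u hu hphi hdecomp
  exact ⟨fun c _ ↦ hcactus c, h⟩

end PaperEDC
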